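/- Let λ_1(G_1) ≥ … ≥ λ_d(G_1) be the eigenvalues of G_1 := (A # B)^2 in decreasing order with multiplicities. Then the log-majorizations (a_i b_{d+1-i})_{i=1}^d ≺_(log) (λ_i(G_1))_{i=1}^d ≺_(log) (a_i b_i)_{i=1}^d hold. -/

import Mathlib

open Matrix Filter Topology Finset
open scoped ComplexOrder

/-- Functional-calculus power of a (Hermitian, in practice positive semidefinite)
matrix, with the convention `0 ^ r = 0` for `r > 0`. -/
noncomputable def psdPow {d : ℕ} (A : Matrix (Fin d) (Fin d) ℂ) (r : ℝ) :
    Matrix (Fin d) (Fin d) ℂ :=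
  if hA : A.IsHermitian then
    (hA.eigenvectorUnitary : Matrix (Fin d) (Fin d) ℂ) *
      Matrix.diagonal (fun i => ((hA.eigenvalues i ^ r : ℝ) : ℂ)) *
      star (hA.eigenvectorUnitary : Matrix (Fin d) (Fin d) ℂ)
  else 0

/-- The eigenvalues of a Hermitian matrix, sorted in decreasing order
(with multiplicities). -/
noncomputable def eigsDesc {d : ℕ} (A : Matrix (Fin d) (Fin d) ℂ) : Fin d → ℝ :=
  if hA : A.IsHermitian then
    fun i => hA.eigenvalues (Tuple.sort hA.eigenvalues i.rev)
  else 0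

/-- The geometric mean `X # Y = X^{1/2} (X^{-1/2} Y X^{-1/2})^{1/2} X^{1/2}`,
as used for positive definite `X` (negative functional-calculus powers are taken in the
generalized-inverse sense). -/
noncomputable def geoMeanPD {d : ℕ} (X Y : Matrix (Fin d) (Fin d) ℂ) :
    Matrix (Fin d) (Fin d) ℂ :=
  psdPow X (1 / 2) *
    psdPow (psdPow X (-(1 / 2)) * Y * psdPow X (-(1 / 2))) (1 / 2) *
    psdPow X (1 / 2)

/-- The geometric mean of two positive semidefinite matrices:
`X # Y := lim_{ε↓0} (X + εI) # (Y + εI)`. -/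
noncomputable def geoMean {d : ℕ} (X Y : Matrix (Fin d) (Fin d) ℂ) :
    Matrix (Fin d) (Fin d) ℂ :=
  limUnder (nhdsWithin (0 : ℝ) (Set.Ioi 0))
    (fun ε : ℝ => geoMeanPD (X + (ε : ℂ) • 1) (Y + (ε : ℂ) • 1))

/-- `Gmat A B p = (A^p # B^p)^{2/p}`. -/
noncomputable def Gmat {d : ℕ} (A B : Matrix (Fin d) (Fin d) ℂ) (p : ℝ) :
    Matrix (Fin d) (Fin d) ℂ :=
  psdPow (geoMean (psdPow A p) (psdPow B p)) (2 / p)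

/-- The decreasing rearrangement of a tuple of reals. -/
noncomputable def sortDesc {d : ℕ} (x : Fin d → ℝ) : Fin d → ℝ :=
  fun i => x (Tuple.sort x i.rev)

/-- Log-majorization `x ≺_(log) y` of tuples of nonnegative reals: each partial product
of the `k` largest entries of `x` is at most the corresponding one for `y`, with equality
for the full products. -/
def IsLogMaj {d : ℕ} (x y : Fin d → ℝ) : Prop :=
  (∀ k : Fin d, ∏ i ∈ Finset.Iic k, sortDesc x i ≤ ∏ i ∈ Finset.Iic k, sortDesc y i) ∧
    ∏ i, x i = ∏ i, y i

/-- `A` is unitarily diagonalised with antitone eigenvalue tuple `α`. -/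
def DiagBy {d : ℕ} (A : Matrix (Fin d) (Fin d) ℂ) (α : Fin d → ℝ) : Prop :=
  Antitone α ∧ ∃ U ∈ Matrix.unitaryGroup (Fin d) ℂ,
    A = U * Matrix.diagonal (fun i => (α i : ℂ)) * Uᴴ

variable {d : ℕ}

theorem unit_l {U : Matrix (Fin d) (Fin d) ℂ} (h : U ∈ Matrix.unitaryGroup (Fin d) ℂ) :
    Uᴴ * U = 1 := (Matrix.mem_unitaryGroup_iff'.1 h)

theorem unit_r {U : Matrix (Fin d) (Fin d) ℂ} (h : U ∈ Matrix.unitaryGroup (Fin d) ℂ) :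
    U * Uᴴ = 1 := (Matrix.mem_unitaryGroup_iff.1 h)

theorem antitone_sortDesc (x : Fin d → ℝ) : Antitone (sortDesc x) := by
  intro i j h
  exact Tuple.monotone_sort x (Fin.rev_le_rev.2 h)

theorem sortDesc_of_antitone {x : Fin d → ℝ} (hx : Antitone x) : sortDesc x = x := by
  have h : x ∘ (Fin.revPerm : Equiv.Perm (Fin d)) = x ∘ Tuple.sort x := by
    rw [Tuple.comp_sort_eq_comp_iff_monotone.2]
    intro i j h
    exact hx (Fin.rev_le_rev.2 h)
  funext i
  have := congrFun h i.rev
  simpa [sortDesc] using this.symm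

theorem DiagBy.of_hermitian {A : Matrix (Fin d) (Fin d) ℂ} (hA : A.IsHermitian) :
    DiagBy A (eigsDesc A) := by
  refine ⟨?_, ?_⟩
  · rw [eigsDesc, dif_pos hA]
    exact antitone_sortDesc hA.eigenvalues
  · let σ : Equiv.Perm (Fin d) := Fin.revPerm.trans (Tuple.sort hA.eigenvalues)
    let U0 : Matrix (Fin d) (Fin d) ℂ := hA.eigenvectorUnitary
    have hU0 : U0 ∈ Matrix.unitaryGroup (Fin d) ℂ := hA.eigenvectorUnitary.2
    have hs : A = U0 * Matrix.diagonal (fun i => (hA.eigenvalues i : ℂ)) * U0ᴴ := by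
      have := hA.spectral_theorem
      rw [Unitary.conjStarAlgAut_apply] at this
      exact this
    refine ⟨U0.submatrix id σ, ?_, ?_⟩
    · rw [Matrix.mem_unitaryGroup_iff, star_eq_conjTranspose, conjTranspose_submatrix,
        submatrix_mul_equiv, unit_r hU0]
      simp
    · have : eigsDesc A = hA.eigenvalues ∘ σ := by
        rw [eigsDesc, dif_pos hA]; rfl
      rw [this]
      have h2 : Matrix.diagonal (fun i => ((hA.eigenvalues ∘ σ) i : ℂ)) =
        (Matrix.diagonal (fun i => (hA.eigenvalues i : ℂ))).submatrix σ σ := by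
        rw [submatrix_diagonal_equiv]; rfl
      rw [h2, conjTranspose_submatrix, submatrix_mul_equiv, submatrix_mul_equiv]
      simpa using hs

theorem quad_form (U : Matrix (Fin d) (Fin d) ℂ) (α : Fin d → ℝ) (v : Fin d → ℂ) :
    star v ⬝ᵥ (U * Matrix.diagonal (fun i => (α i : ℂ)) * Uᴴ) *ᵥ v =
      ((∑ j, α j * Complex.normSq ((Uᴴ *ᵥ v) j) : ℝ) : ℂ) := by
  have : star v ⬝ᵥ (U * Matrix.diagonal (fun i => (α i : ℂ)) * Uᴴ) *ᵥ v =
     star (Uᴴ *ᵥ v) ⬝ᵥ (Matrix.diagonal (fun i => (α i : ℂ)) *ᵥ (Uᴴ *ᵥ v)) := by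
    rw [← mulVec_mulVec, ← mulVec_mulVec, dotProduct_mulVec, star_mulVec, conjTranspose_conjTranspose]
  rw [this]
  simp only [dotProduct, mulVec_diagonal, Pi.star_apply]
  push_cast
  refine Finset.sum_congr rfl fun j _ => ?_
  rw [Complex.normSq_eq_conj_mul_self]
  simp only [Complex.star_def]
  ring

theorem quad_one {U : Matrix (Fin d) (Fin d) ℂ} (h : U ∈ Matrix.unitaryGroup (Fin d) ℂ)
    (v : Fin d → ℂ) :
    ∑ j, Complex.normSq ((Uᴴ *ᵥ v) j) = ∑ j, Complex.normSq (v j) := by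
  have h1 := quad_form U 1 v
  have h2 := quad_form 1 1 v
  simp only [Pi.one_apply, Complex.ofReal_one, diagonal_one, mul_one, unit_r h, one_mul,
    conjTranspose_one, one_mulVec] at h1 h2
  exact_mod_cast h1.symm.trans h2

theorem DiagBy.mono {A B : Matrix (Fin d) (Fin d) ℂ} {α β : Fin d → ℝ}
    (hA : DiagBy A α) (hB : DiagBy B β) (hAB : (B - A).PosSemidef) (i : Fin d) : α i ≤ β i := by
  obtain ⟨ha, U, hU, rfl⟩ := hA
  obtain ⟨hb, V, hV, rfl⟩ := hB
  let M : Matrix (Fin d) (Fin d) ℂ := fun j =>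
    if i < j then Uᴴ j else if j < i then Vᴴ j else 0
  have hM : M.det = 0 := det_eq_zero_of_row_eq_zero i (by intro j; simp [M])
  obtain ⟨v, hv, hMv⟩ := Matrix.exists_mulVec_eq_zero_iff.2 hM
  have hu0 : ∀ j, i < j → (Uᴴ *ᵥ v) j = 0 := by
    intro j hj
    have := congrFun hMv j
    simpa [M, mulVec, hj] using this
  have hv0 : ∀ j, j < i → (Vᴴ *ᵥ v) j = 0 := by
    intro j hj
    have := congrFun hMv j
    simpa [M, mulVec, hj, hj.le, not_lt.2 hj.le] using this
  have hpos : 0 < ∑ j, Complex.normSq (v j) := by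
    obtain ⟨j, hj⟩ := Function.ne_iff.1 hv
    exact Finset.sum_pos' (fun _ _ => Complex.normSq_nonneg _) ⟨j, mem_univ _, Complex.normSq_pos.2 hj⟩
  have hq := hAB.dotProduct_mulVec_nonneg v
  rw [sub_mulVec, dotProduct_sub, quad_form, quad_form, ← Complex.ofReal_sub] at hq
  have hq' := Complex.zero_le_real.1 hq
  have h1 : α i * ∑ j, Complex.normSq (v j) ≤ ∑ j, α j * Complex.normSq ((Uᴴ *ᵥ v) j) := by
    rw [← quad_one hU, Finset.mul_sum]
    refine Finset.sum_le_sum fun j _ => ?_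
    rcases lt_or_ge i j with h | h
    · simp [hu0 j h]
    · exact mul_le_mul_of_nonneg_right (ha h) (Complex.normSq_nonneg _)
  have h2 : ∑ j, β j * Complex.normSq ((Vᴴ *ᵥ v) j) ≤ β i * ∑ j, Complex.normSq (v j) := by
    rw [← quad_one hV, Finset.mul_sum]
    refine Finset.sum_le_sum fun j _ => ?_
    rcases lt_or_ge j i with h | h
    · simp [hv0 j h]
    · exact mul_le_mul_of_nonneg_right (hb h) (Complex.normSq_nonneg _)
  exact le_of_mul_le_mul_right (by linarith) hpos

theorem DiagBy.unique {A : Matrix (Fin d) (Fin d) ℂ} {α β : Fin d → ℝ}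
    (hA : DiagBy A α) (hB : DiagBy A β) : α = β :=
  funext fun i => le_antisymm (hA.mono hB (by simpa using PosSemidef.zero) i)
    (hB.mono hA (by simpa using PosSemidef.zero) i)

theorem DiagBy.isHermitian {A : Matrix (Fin d) (Fin d) ℂ} {α : Fin d → ℝ} (hA : DiagBy A α) :
    A.IsHermitian := by
  obtain ⟨_, U, _, rfl⟩ := hA
  apply isHermitian_mul_mul_conjTranspose
  rw [isHermitian_diagonal_iff]
  intro i
  simp [IsSelfAdjoint]

theorem diag_psd (U : Matrix (Fin d) (Fin d) ℂ) {α : Fin d → ℝ} (h : ∀ i, 0 ≤ α i) :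
    (U * Matrix.diagonal (fun i => (α i : ℂ)) * Uᴴ).PosSemidef := by
  apply PosSemidef.mul_mul_conjTranspose_same
  exact PosSemidef.diagonal (fun i => by simpa using h i)

theorem DiagBy.det {A : Matrix (Fin d) (Fin d) ℂ} {α : Fin d → ℝ} (hA : DiagBy A α) :
    A.det = ((∏ i, α i : ℝ) : ℂ) := by
  obtain ⟨_, U, hU, rfl⟩ := hA
  rw [det_mul_right_comm, unit_r hU, one_mul, det_diagonal]
  push_cast; rfl

theorem DiagBy.posDef {A : Matrix (Fin d) (Fin d) ℂ} {α : Fin d → ℝ} (hA : DiagBy A α)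
    (h : ∀ i, 0 < α i) : A.PosDef := by
  have hd := hA.det
  have : A.PosSemidef := by
    obtain ⟨_, U, _, rfl⟩ := hA
    exact diag_psd U (fun i => (h i).le)
  rw [this.posDef_iff_isUnit, isUnit_iff_isUnit_det, hd, isUnit_iff_ne_zero]
  exact_mod_cast (Finset.prod_pos (fun i _ => h i)).ne'

theorem DiagBy.pos {A : Matrix (Fin d) (Fin d) ℂ} {α : Fin d → ℝ} (hA : DiagBy A α)
    (h : A.PosDef) (i) : 0 < α i := by
  obtain ⟨_, U, hU, rfl⟩ := hA
  have h1 : (Uᴴ * (U * Matrix.diagonal (fun i => (α i : ℂ)) * Uᴴ) * U).PosDef := by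
    apply PosDef.conjTranspose_mul_mul_same h
    exact mulVec_injective_of_isUnit (IsUnit.of_mul_eq_one _ (unit_r hU))
  have h2 : Uᴴ * (U * Matrix.diagonal (fun i => (α i : ℂ)) * Uᴴ) * U =
     Matrix.diagonal (fun i => (α i : ℂ)) := by
    simp only [Matrix.mul_assoc, unit_l hU, mul_one]
    rw [← Matrix.mul_assoc, unit_l hU, one_mul]
  rw [h2, posDef_diagonal_iff] at h1
  exact_mod_cast h1 i

theorem DiagBy.nonneg {A : Matrix (Fin d) (Fin d) ℂ} {α : Fin d → ℝ} (hA : DiagBy A α)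
    (h : A.PosSemidef) (i) : 0 ≤ α i := by
  have h0 : DiagBy (0 : Matrix (Fin d) (Fin d) ℂ) (fun _ => 0) :=
    ⟨antitone_const, 1, one_mem _, by simp⟩
  exact h0.mono hA (by simpa using h) i

theorem DiagBy.smul {A : Matrix (Fin d) (Fin d) ℂ} {α : Fin d → ℝ} (hA : DiagBy A α)
    {t : ℝ} (ht : 0 ≤ t) : DiagBy ((t : ℂ) • A) (fun i => t * α i) := by
  obtain ⟨ha, U, hU, rfl⟩ := hA
  refine ⟨fun i j h => mul_le_mul_of_nonneg_left (ha h) ht, U, hU, ?_⟩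
  rw [← smul_mul_assoc, ← mul_smul_comm, ← diagonal_smul]
  congr; funext i; simp

theorem DiagBy.add {A : Matrix (Fin d) (Fin d) ℂ} {α : Fin d → ℝ} (hA : DiagBy A α)
    (t : ℝ) : DiagBy (A + (t : ℂ) • 1) (fun i => α i + t) := by
  obtain ⟨ha, U, hU, rfl⟩ := hA
  refine ⟨fun i j h => by have := ha h; simp; linarith, U, hU, ?_⟩
  have : Matrix.diagonal (fun i => ((α i + t : ℝ) : ℂ)) =
    Matrix.diagonal (fun i => (α i : ℂ)) + (t : ℂ) • 1 := by
    ext i j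
    by_cases h : i = j
    · subst h; simp
    · simp [h]
  rw [this, mul_add, add_mul, mul_smul_comm, smul_mul_assoc, mul_one, unit_r hU]

/-- `N Nᴴ` and `Nᴴ N` have the same eigenvalues. -/
theorem DiagBy.swap {N : Matrix (Fin d) (Fin d) ℂ} {α : Fin d → ℝ} (hA : DiagBy (N * Nᴴ) α)
    (h : ∀ i, 0 < α i) : DiagBy (Nᴴ * N) α := by
  obtain ⟨ha, U, hU, hN⟩ := hA
  let E : Matrix (Fin d) (Fin d) ℂ := Matrix.diagonal (fun i => (((√(α i))⁻¹ : ℝ) : ℂ))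
  have hE : Eᴴ = E := by simp [E, diagonal_conjTranspose, Pi.star_def]
  have hED : E * Matrix.diagonal (fun i => (α i : ℂ)) * E = 1 := by
    simp only [E, diagonal_mul_diagonal]
    rw [← diagonal_one]; congr; funext i
    have := Real.sqrt_pos.2 (h i)
    norm_cast
    nth_rewrite 2 [← Real.mul_self_sqrt (h i).le]
    field_simp
  refine ⟨ha, Nᴴ * U * E, ?_, ?_⟩
  · rw [mem_unitaryGroup_iff', star_eq_conjTranspose]
    calc (Nᴴ * U * E)ᴴ * (Nᴴ * U * E) = E * (Uᴴ * (N * Nᴴ) * U) * E := by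
          simp only [conjTranspose_mul, conjTranspose_conjTranspose, hE, Matrix.mul_assoc]
      _ = E * ((Uᴴ * U) * Matrix.diagonal (fun i => (α i : ℂ)) * (Uᴴ * U)) * E := by
          rw [hN]; simp only [Matrix.mul_assoc]
      _ = 1 := by rw [unit_l hU, one_mul, mul_one, hED]
  · symm
    calc Nᴴ * U * E * Matrix.diagonal (fun i => (α i : ℂ)) * (Nᴴ * U * E)ᴴ
        = Nᴴ * (U * (E * Matrix.diagonal (fun i => (α i : ℂ)) * E) * Uᴴ) * N := by
          simp only [conjTranspose_mul, conjTranspose_conjTranspose, hE, Matrix.mul_assoc]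
      _ = Nᴴ * N := by rw [hED, mul_one, unit_r hU, mul_one]

/-- Multiplicative Lidskii inequality (Li and Mathias argument). -/
theorem key {X P : Matrix (Fin d) (Fin d) ℂ} {p α μ : Fin d → ℝ}
    (hP : DiagBy P p) (hp : ∀ i, 0 < p i) (hα : DiagBy (X * Xᴴ) α) (hα0 : ∀ i, 0 < α i)
    (hμ : DiagBy (X * P * Xᴴ) μ) (hμ0 : ∀ i, 0 ≤ μ i) (k : Fin d) (S : Finset (Fin d))
    (hS : S.card = (Finset.Iic k).card) :
    ∏ i ∈ S, μ i ≤ (∏ i ∈ S, α i) * ∏ i ∈ Finset.Iic k, p i := by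
  obtain ⟨hpa, U, hU, hPU⟩ := hP
  set t := p k with ht
  have ht0 : 0 < t := hp k
  let q : Fin d → ℝ := fun i => max (p i) t
  let Q : Matrix (Fin d) (Fin d) ℂ := U * Matrix.diagonal (fun i => (q i : ℂ)) * Uᴴ
  have hQ : DiagBy Q q := ⟨fun i j h => max_le_max_right _ (hpa h), U, hU, rfl⟩
  have hX : (X * Q * Xᴴ).IsHermitian := isHermitian_mul_mul_conjTranspose _ hQ.isHermitian
  have hν := DiagBy.of_hermitian hX
  set ν := eigsDesc (X * Q * Xᴴ)
  have h1 : ∀ i, μ i ≤ ν i := by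
    refine hμ.mono hν ?_
    have : X * Q * Xᴴ - X * P * Xᴴ =
        X * (U * Matrix.diagonal (fun i => ((q i - p i : ℝ) : ℂ)) * Uᴴ) * Xᴴ := by
      rw [← sub_mul, ← mul_sub, hPU, ← sub_mul, ← mul_sub, diagonal_sub]
      congr; funext i; simp
    rw [this]
    exact (diag_psd U (fun i => sub_nonneg.2 (le_max_left _ _))).mul_mul_conjTranspose_same X
  have h2 : ∀ i, t * α i ≤ ν i := by
    refine (hα.smul ht0.le).mono hν ?_
    have h3 : (U * Matrix.diagonal (fun i => ((t : ℝ) : ℂ)) * Uᴴ) = (t : ℂ) • 1 := by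
      rw [← smul_one_eq_diagonal, mul_smul_comm, smul_mul_assoc, mul_one, unit_r hU]
    have : X * Q * Xᴴ - (t : ℂ) • (X * Xᴴ) =
        X * (U * Matrix.diagonal (fun i => ((q i - t : ℝ) : ℂ)) * Uᴴ) * Xᴴ := by
      have h4 : (t : ℂ) • (X * Xᴴ) = X * ((t : ℂ) • 1) * Xᴴ := by
        rw [mul_smul_comm, smul_mul_assoc, mul_one]
      rw [h4, ← h3, ← sub_mul, ← mul_sub, ← sub_mul, ← mul_sub, diagonal_sub]
      congr; funext i; simp
    rw [this]
    exact (diag_psd U (fun i => sub_nonneg.2 (le_max_right _ _))).mul_mul_conjTranspose_same X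
  have hdet : ∏ i, ν i = (∏ i, α i) * ∏ i, q i := by
    have e1 := hν.det
    have e2 := hα.det
    have e3 := hQ.det
    rw [det_mul] at e2
    rw [det_mul_right_comm, det_mul, det_mul, e2, e3] at e1
    exact_mod_cast e1.symm
  have hq : ∏ i, q i = (∏ i ∈ Finset.Iic k, p i) * t ^ (Sᶜ.card) := by
    rw [← Finset.prod_mul_prod_compl (Finset.Iic k)]
    congr 1
    · refine Finset.prod_congr rfl fun i hi => ?_
      exact max_eq_left (hpa (Finset.mem_Iic.1 hi))
    · rw [Finset.card_compl, hS, ← Finset.card_compl]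
      refine Finset.prod_eq_pow_card fun i hi => ?_
      rw [Finset.mem_compl, Finset.mem_Iic, not_le] at hi
      exact max_eq_right (hpa hi.le)
  have h5 : ∏ i ∈ S, μ i ≤ ∏ i ∈ S, ν i :=
    Finset.prod_le_prod (fun i _ => hμ0 i) (fun i _ => h1 i)
  refine h5.trans ?_
  have hc : 0 < ∏ i ∈ Sᶜ, (t * α i) := Finset.prod_pos fun i _ => mul_pos ht0 (hα0 i)
  refine le_of_mul_le_mul_right ?_ hc
  calc (∏ i ∈ S, ν i) * ∏ i ∈ Sᶜ, (t * α i)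
      ≤ (∏ i ∈ S, ν i) * ∏ i ∈ Sᶜ, ν i := by
        refine mul_le_mul_of_nonneg_left ?_ (Finset.prod_nonneg fun i _ => (hμ0 i).trans (h1 i))
        exact Finset.prod_le_prod (fun i _ => (mul_pos ht0 (hα0 i)).le) (fun i _ => h2 i)
    _ = _ := by
        rw [Finset.prod_mul_prod_compl, hdet, hq, ← Finset.prod_mul_prod_compl S α,
          Finset.prod_mul_distrib, Finset.prod_const]
        ring

theorem posDef_factor {A : Matrix (Fin d) (Fin d) ℂ} (hA : A.PosDef) :
    ∃ X : Matrix (Fin d) (Fin d) ℂ, A = X * Xᴴ ∧ X * X⁻¹ = 1 ∧ X⁻¹ * X = 1 ∧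
      A⁻¹ = X⁻¹ᴴ * X⁻¹ := by
  obtain ⟨hα, U, hU, h⟩ := DiagBy.of_hermitian hA.isHermitian
  have hpos := (DiagBy.of_hermitian hA.isHermitian).pos hA
  set α := eigsDesc A
  let X := U * Matrix.diagonal (fun i => ((√(α i) : ℝ) : ℂ))
  have h1 : A = X * Xᴴ := by
    simp only [X, conjTranspose_mul, diagonal_conjTranspose]
    rw [Matrix.mul_assoc, ← Matrix.mul_assoc (diagonal _), diagonal_mul_diagonal, ← Matrix.mul_assoc]
    rw [h]; congr; funext i
    simp only [Pi.star_apply, Complex.star_def, Complex.conj_ofReal]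
    norm_cast
    rw [Real.mul_self_sqrt (hpos i).le]
  have hu : IsUnit X.det := by
    have := (isUnit_iff_isUnit_det _).1 hA.isUnit
    rw [h1, det_mul] at this
    exact isUnit_of_mul_isUnit_left this
  refine ⟨X, h1, mul_nonsing_inv _ hu, nonsing_inv_mul _ hu, ?_⟩
  rw [h1, Matrix.mul_inv_rev, conjTranspose_nonsing_inv]

theorem IsHermitian_eq {A : Matrix (Fin d) (Fin d) ℂ} (h : A.IsHermitian) : Aᴴ = A := h

/-- The Riccati characterisation gives the swapped eigenvalues. -/
theorem riccati_upper {A B G : Matrix (Fin d) (Fin d) ℂ} {a b g : Fin d → ℝ}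
    (hA : DiagBy A a) (hB : DiagBy B b) (hG : DiagBy (G ^ 2) g) (ha : ∀ i, 0 < a i)
    (hb : ∀ i, 0 < b i) (hGp : G.PosDef) (hR : G * A⁻¹ * G = B) (k : Fin d)
    (S : Finset (Fin d)) (hS : S.card = (Finset.Iic k).card) :
    ∏ i ∈ S, g i ≤ (∏ i ∈ S, a i) * ∏ i ∈ Finset.Iic k, b i := by
  obtain ⟨X, rfl, hX1, hX2, hXi⟩ := posDef_factor (hA.posDef ha)
  have hGh := IsHermitian_eq hGp.isHermitian
  let N := G * X⁻¹ᴴ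
  have hN : N * Nᴴ = B := by
    rw [← hR, hXi]
    simp only [N, conjTranspose_mul, conjTranspose_conjTranspose, hGh, Matrix.mul_assoc]
  have hP : DiagBy (Nᴴ * N) b := DiagBy.swap (by rw [hN]; exact hB) hb
  have hX3 : X⁻¹ᴴ * Xᴴ = 1 := by rw [← conjTranspose_mul, hX1, conjTranspose_one]
  have hG2 : X * (Nᴴ * N) * Xᴴ = G ^ 2 := by
    calc X * (Nᴴ * N) * Xᴴ = (X * X⁻¹) * G * G * (X⁻¹ᴴ * Xᴴ) := by
          simp only [N, conjTranspose_mul, conjTranspose_conjTranspose, hGh, Matrix.mul_assoc]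
      _ = G ^ 2 := by rw [hX1, hX3, one_mul, mul_one, pow_two]
  have hg0 : ∀ i, 0 ≤ g i := hG.nonneg (hGp.posSemidef.pow 2)
  exact key hP hb hA ha (by rw [hG2]; exact hG) hg0 k S hS

theorem DiagBy.inv {A : Matrix (Fin d) (Fin d) ℂ} {a : Fin d → ℝ}
    (hA : DiagBy A a) (ha : ∀ i, 0 < a i) : DiagBy A⁻¹ (fun i => (a i.rev)⁻¹) := by
  have hp := (hA.posDef ha).inv
  obtain ⟨h1, U, hU, h⟩ := hA
  refine ⟨fun i j hij => inv_anti₀ (ha _) (h1 (Fin.rev_le_rev.2 hij)), 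
    U.submatrix id Fin.revPerm, ?_, ?_⟩
  · rw [Matrix.mem_unitaryGroup_iff, star_eq_conjTranspose, conjTranspose_submatrix,
        submatrix_mul_equiv, unit_r hU]
    simp
  · have h2 : Matrix.diagonal (fun i => (((a i.rev)⁻¹ : ℝ) : ℂ)) =
        (Matrix.diagonal (fun i => (((a i)⁻¹ : ℝ) : ℂ))).submatrix Fin.revPerm Fin.revPerm := by
      rw [submatrix_diagonal_equiv]; rfl
    rw [h2, conjTranspose_submatrix, submatrix_mul_equiv, submatrix_mul_equiv, submatrix_id_id]
    apply inv_eq_right_inv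
    rw [h]
    calc _ = U * diagonal (fun i => (a i : ℂ)) * (Uᴴ * U) * diagonal (fun i => (((a i)⁻¹ : ℝ) : ℂ)) * Uᴴ := by
          simp only [Matrix.mul_assoc]
      _ = 1 := by
          rw [unit_l hU, mul_one, Matrix.mul_assoc U, diagonal_mul_diagonal]
          have : (fun i => (a i : ℂ) * (((a i)⁻¹ : ℝ) : ℂ)) = fun _ => 1 := by
            funext i
            have := (ha i).ne'
            norm_cast
            field_simp
          rw [this, diagonal_one, mul_one, unit_r hU]

theorem riccati_lower {A B G : Matrix (Fin d) (Fin d) ℂ} {a b g : Fin d → ℝ}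
    (hA : DiagBy A a) (hB : DiagBy B b) (hG : DiagBy (G ^ 2) g) (ha : ∀ i, 0 < a i)
    (hb : ∀ i, 0 < b i) (hGp : G.PosDef) (hR : G * A⁻¹ * G = B) (k : Fin d)
    (S : Finset (Fin d)) (hS : S.card = (Finset.Iic k).card) :
    ∏ i ∈ S, (a i * b i.rev) ≤ ∏ i ∈ Finset.Iic k, g i := by
  have hGh := IsHermitian_eq hGp.isHermitian
  have hGu := (isUnit_iff_isUnit_det _).1 hGp.isUnit
  have hAu := (isUnit_iff_isUnit_det _).1 (hA.posDef ha).isUnit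
  have hBi := hB.inv hb
  have hBp := hBi.posDef (fun i => inv_pos.2 (hb _))
  obtain ⟨X, hX, hX1, hX2, hXi⟩ := posDef_factor hBp
  have hR2 : G * B⁻¹ * G = A := by
    rw [← hR, Matrix.mul_inv_rev, Matrix.mul_inv_rev, nonsing_inv_nonsing_inv _ hAu]
    calc _ = (G * G⁻¹) * A * (G⁻¹ * G) := by simp only [Matrix.mul_assoc]
      _ = A := by rw [mul_nonsing_inv _ hGu, nonsing_inv_mul _ hGu, one_mul, mul_one]
  have h1 : DiagBy ((G * X) * (G * X)ᴴ) a := by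
    have : (G * X) * (G * X)ᴴ = A := by
      rw [← hR2, hX]; simp only [conjTranspose_mul, hGh, Matrix.mul_assoc]
    rwa [this]
  have h2 := h1.swap ha
  have h3 : (G * X)ᴴ * (G * X) = Xᴴ * G ^ 2 * Xᴴᴴ := by
    simp only [conjTranspose_mul, conjTranspose_conjTranspose, hGh, Matrix.mul_assoc, pow_two]
  rw [h3] at h2
  have h4 : DiagBy (Xᴴ * Xᴴᴴ) (fun i => (b i.rev)⁻¹) := by
    rw [conjTranspose_conjTranspose]
    exact DiagBy.swap (by rw [← hX]; exact hBi) (fun i => inv_pos.2 (hb _))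
  have h5 := key hG (hG.pos (by rw [pow_two]; nth_rewrite 1 [← hGh]; exact PosDef.conjTranspose_mul_self _ (mulVec_injective_of_isUnit hGp.isUnit))) h4 (fun i => inv_pos.2 (hb _)) h2 (fun i => (ha i).le) k S hS
  rw [Finset.prod_inv_distrib] at h5
  rw [Finset.prod_mul_distrib]
  have : 0 < ∏ i ∈ S, b i.rev := Finset.prod_pos fun i _ => hb _
  rwa [inv_mul_eq_div, le_div_iff₀ this] at h5

theorem psdPow_hermitian (A : Matrix (Fin d) (Fin d) ℂ) (r : ℝ) : (psdPow A r)ᴴ = psdPow A r := by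
  unfold psdPow
  split_ifs with h
  · apply isHermitian_mul_mul_conjTranspose
    rw [isHermitian_diagonal_iff]
    intro i
    simp [IsSelfAdjoint]
  · simp

theorem psdPow_mul {A : Matrix (Fin d) (Fin d) ℂ} (hA : A.PosDef) (r s : ℝ) :
    psdPow A r * psdPow A s = psdPow A (r + s) := by
  unfold psdPow
  rw [dif_pos hA.isHermitian]
  simp only [dif_pos hA.isHermitian]
  set U : Matrix (Fin d) (Fin d) ℂ := hA.isHermitian.eigenvectorUnitary.1
  have hU : star U * U = 1 := unit_l hA.isHermitian.eigenvectorUnitary.2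
  calc _ = U * (diagonal (fun i => ((hA.isHermitian.eigenvalues i ^ r : ℝ) : ℂ)) * (star U * U) *
       diagonal (fun i => ((hA.isHermitian.eigenvalues i ^ s : ℝ) : ℂ))) * star U := by
        simp only [Matrix.mul_assoc]
    _ = _ := by
      rw [hU, mul_one, diagonal_mul_diagonal]
      congr; funext i
      rw [Real.rpow_add (hA.eigenvalues_pos i)]
      norm_cast

theorem psdPow_one {A : Matrix (Fin d) (Fin d) ℂ} (hA : A.PosDef) : psdPow A 1 = A := by
  unfold psdPow
  rw [dif_pos hA.isHermitian]
  simp only [Real.rpow_one]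
  have := hA.isHermitian.spectral_theorem
  rw [Unitary.conjStarAlgAut_apply] at this
  exact this.symm

theorem psdPow_zero (A : Matrix (Fin d) (Fin d) ℂ) (hA : A.PosDef) : psdPow A 0 = 1 := by
  unfold psdPow
  rw [dif_pos hA.isHermitian]
  simp only [Real.rpow_zero, Complex.ofReal_one, diagonal_one, mul_one]
  exact unit_r hA.isHermitian.eigenvectorUnitary.2

theorem psdPow_posDef {A : Matrix (Fin d) (Fin d) ℂ} (hA : A.PosDef) (r : ℝ) :
    (psdPow A r).PosDef := by
  have h1 : psdPow A r = (psdPow A (r/2))ᴴ * psdPow A (r/2) := by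
    rw [psdPow_hermitian, psdPow_mul hA]; congr 1; ring
  rw [h1]
  apply PosDef.conjTranspose_mul_self
  apply mulVec_injective_of_isUnit
  apply IsUnit.of_mul_eq_one (psdPow A (-(r/2)))
  rw [psdPow_mul hA, add_neg_cancel, psdPow_zero _ hA]

theorem geoMeanPD_spec {X Y : Matrix (Fin d) (Fin d) ℂ} (hX : X.PosDef) (hY : Y.PosDef) :
    (geoMeanPD X Y).PosDef ∧ geoMeanPD X Y * X⁻¹ * geoMeanPD X Y = Y := by
  unfold geoMeanPD
  set R := psdPow X (1/2) with hRd
  set T := psdPow X (-(1/2)) with hTd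
  have hR : Rᴴ = R := psdPow_hermitian _ _
  have hT : Tᴴ = T := psdPow_hermitian _ _
  have hRT : R * T = 1 := by rw [hRd, hTd, psdPow_mul hX, add_neg_cancel, psdPow_zero _ hX]
  have hTR : T * R = 1 := by rw [hRd, hTd, psdPow_mul hX, neg_add_cancel, psdPow_zero _ hX]
  have hRR : R * R = X := by rw [hRd, psdPow_mul hX, add_halves, psdPow_one hX]
  have hXi : X⁻¹ = T * T := by
    apply inv_eq_right_inv
    calc X * (T * T) = R * (R * T) * T := by rw [← hRR]; simp only [Matrix.mul_assoc]
      _ = 1 := by rw [hRT, mul_one, hRT]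
  have hTYT : (T * Y * T).PosDef := by
    nth_rewrite 1 [← hT]
    exact hY.conjTranspose_mul_mul_same (mulVec_injective_of_isUnit (IsUnit.of_mul_eq_one _ hTR))
  set M := psdPow (T * Y * T) (1/2) with hMd
  have hMM : M * M = T * Y * T := by rw [hMd, psdPow_mul hTYT, add_halves, psdPow_one hTYT]
  have hM : M.PosDef := psdPow_posDef hTYT _
  constructor
  · have := hM.conjTranspose_mul_mul_same (mulVec_injective_of_isUnit (IsUnit.of_mul_eq_one _ hRT))
    rwa [hR] at this
  · rw [hXi]
    calc _ = R * M * (R * T) * (T * R) * M * R := by simp only [Matrix.mul_assoc]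
      _ = R * (M * M) * R := by rw [hRT, hTR]; simp only [Matrix.mul_assoc, mul_one]
      _ = (R * T) * Y * (T * R) := by rw [hMM]; simp only [Matrix.mul_assoc]
      _ = Y := by rw [hRT, hTR, one_mul, mul_one]

theorem sqrt_mono {K L : Matrix (Fin d) (Fin d) ℂ} (hK : K.PosDef) (hL : L.PosDef)
    (h : (L * L - K * K).PosSemidef) : (L - K).PosSemidef := by
  have hD : (L - K).IsHermitian := hL.isHermitian.sub hK.isHermitian
  rw [hD.posSemidef_iff_eigenvalues_nonneg]
  intro i
  set t := hD.eigenvalues i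
  set v : Fin d → ℂ := ⇑(hD.eigenvectorBasis i) with hv
  have hv1 : (L - K) *ᵥ v = (t : ℂ) • v := by
    have := hD.mulVec_eigenvectorBasis i
    rw [← hv] at this
    rw [this]; ext j; simp [t]
  have hv0 : v ≠ 0 := by
    have h1 : hD.eigenvectorBasis i ≠ 0 := hD.eigenvectorBasis.orthonormal.ne_zero i
    intro h2
    apply h1
    ext j
    exact congrFun h2 j
  have hq := h.dotProduct_mulVec_nonneg v
  have e : L * L - K * K = L * (L - K) + (L - K) * K := by noncomm_ring
  have e2 : star v ⬝ᵥ (L - K) *ᵥ (K *ᵥ v) = (t : ℂ) * (star v ⬝ᵥ K *ᵥ v) := by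
    rw [dotProduct_mulVec]
    have : star v ᵥ* (L - K) = star ((L - K) *ᵥ v) := by
      rw [star_mulVec, IsHermitian_eq hD]
    rw [this, hv1]
    simp
  rw [e, add_mulVec, dotProduct_add, ← mulVec_mulVec, ← mulVec_mulVec, hv1, e2, mulVec_smul,
    dotProduct_smul, smul_eq_mul, ← mul_add] at hq
  have p1 := hK.dotProduct_mulVec_pos hv0
  have p2 := hL.dotProduct_mulVec_pos hv0
  have p3 := add_pos p2 p1
  have p4 := (Complex.lt_def.1 p3).1
  have hq' := (Complex.le_def.1 hq).1
  rw [Complex.re_ofReal_mul, Complex.zero_re] at hq'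
  rw [Complex.zero_re] at p4
  exact nonneg_of_mul_nonneg_left hq' p4

theorem inv_anti {A B : Matrix (Fin d) (Fin d) ℂ} (hA : A.PosDef) (hB : B.PosDef)
    (h : (B - A).PosSemidef) : (A⁻¹ - B⁻¹).PosSemidef := by
  have hAu := (isUnit_iff_isUnit_det _).1 hA.isUnit
  have : Invertible B := hB.isUnit.invertible
  have : Invertible A⁻¹ := hA.inv.isUnit.invertible
  have h1 := PosDef.fromBlocks₁₁ (1 : Matrix (Fin d) (Fin d) ℂ) A⁻¹ hB
  have h2 := PosDef.fromBlocks₂₂ B (1 : Matrix (Fin d) (Fin d) ℂ) hA.inv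
  rw [nonsing_inv_nonsing_inv _ hAu] at h2
  simp only [conjTranspose_one, one_mul, mul_one] at h1 h2
  exact h1.1 (h2.2 h)

theorem geo_mono {A B A' B' G G' : Matrix (Fin d) (Fin d) ℂ} (hA : A.PosDef) (hA' : A'.PosDef)
    (hG : G.PosDef) (hG' : G'.PosDef) (hR : G * A⁻¹ * G = B) (hR' : G' * A'⁻¹ * G' = B')
    (h1 : (A' - A).PosSemidef) (h2 : (B' - B).PosSemidef) : (G' - G).PosSemidef := by
  have hGh := IsHermitian_eq hG.isHermitian
  have h3 : (G' * A'⁻¹ * G' - G * A'⁻¹ * G).PosSemidef := by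
    have h4 := (inv_anti hA hA' h1).conjTranspose_mul_mul_same G
    rw [hGh] at h4
    have h5 := h2.add h4
    rw [← hR, ← hR'] at h5
    convert h5 using 1
    noncomm_ring
  obtain ⟨X, -, hX1, hX2, hXi⟩ := posDef_factor hA'
  have hX3 : X⁻¹ᴴ * Xᴴ = 1 := by rw [← conjTranspose_mul, hX1, conjTranspose_one]
  have hinj : Function.Injective (X⁻¹ᴴ).mulVec :=
    mulVec_injective_of_isUnit (IsUnit.of_mul_eq_one _ hX3)
  have hK := hG.conjTranspose_mul_mul_same hinj
  have hL := hG'.conjTranspose_mul_mul_same hinj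
  rw [conjTranspose_conjTranspose] at hK hL
  have h6 : (X⁻¹ * G' * X⁻¹ᴴ - X⁻¹ * G * X⁻¹ᴴ).PosSemidef := by
    apply sqrt_mono hK hL
    have h7 := h3.mul_mul_conjTranspose_same X⁻¹
    convert h7 using 1
    rw [hXi]
    noncomm_ring
  have h8 := h6.mul_mul_conjTranspose_same X
  have h9 : X * (X⁻¹ * G' * X⁻¹ᴴ - X⁻¹ * G * X⁻¹ᴴ) * Xᴴ = G' - G := by
    calc _ = (X * X⁻¹) * (G' - G) * (X⁻¹ᴴ * Xᴴ) := by noncomm_ring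
      _ = _ := by rw [hX1, hX3, one_mul, mul_one]
  rwa [h9] at h8

theorem polar (M : Matrix (Fin d) (Fin d) ℂ) (i j : Fin d) :
    M i j = (1 / 2 : ℂ) * ((star (Pi.single i 1 + Pi.single j 1 : Fin d → ℂ) ⬝ᵥ M *ᵥ
        (Pi.single i 1 + Pi.single j 1)
        - star (Pi.single i 1 : Fin d → ℂ) ⬝ᵥ M *ᵥ (Pi.single i 1)
        - star (Pi.single j 1 : Fin d → ℂ) ⬝ᵥ M *ᵥ (Pi.single j 1))
      - Complex.I * (star (Pi.single i 1 + Pi.single j Complex.I : Fin d → ℂ) ⬝ᵥ M *ᵥ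
        (Pi.single i 1 + Pi.single j Complex.I)
        - star (Pi.single i 1 : Fin d → ℂ) ⬝ᵥ M *ᵥ (Pi.single i 1)
        - star (Pi.single j 1 : Fin d → ℂ) ⬝ᵥ M *ᵥ (Pi.single j 1))) := by
  have hs : ∀ (k : Fin d) (c : ℂ), star (Pi.single k c : Fin d → ℂ) = Pi.single k (star c) := by
    intro k c
    ext m
    by_cases h : m = k
    · subst h; simp
    · simp [h]
  simp only [star_add, hs, mulVec_add, dotProduct_add, add_dotProduct, single_dotProduct,
    mulVec_single, Complex.star_def, Complex.conj_I, map_one]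
  simp
  have := Complex.I_mul_I
  linear_combination (M i j / 2 - M j i / 2 - M j j / 2 * Complex.I) * this

theorem herm_quad {M : Matrix (Fin d) (Fin d) ℂ} (hM : M.IsHermitian) (v : Fin d → ℂ) :
    star v ⬝ᵥ M *ᵥ v = (((star v ⬝ᵥ M *ᵥ v).re : ℝ) : ℂ) := by
  obtain ⟨-, U, -, h⟩ := DiagBy.of_hermitian hM
  have := quad_form U (eigsDesc M) v
  rw [← h] at this
  rw [this, Complex.ofReal_re]

theorem exists_lim (f : ℝ → Matrix (Fin d) (Fin d) ℂ) (hf : ∀ ε, 0 < ε → (f ε).PosSemidef)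
    (hm : ∀ ε δ, 0 < ε → ε ≤ δ → (f δ - f ε).PosSemidef) :
    ∃ L, Tendsto f (𝓝[>] 0) (𝓝 L) := by
  have h1 : ∀ v : Fin d → ℂ, ∃ l : ℂ, Tendsto (fun ε => star v ⬝ᵥ f ε *ᵥ v) (𝓝[>] 0) (𝓝 l) := by
    intro v
    have hmono : MonotoneOn (fun ε => (star v ⬝ᵥ f ε *ᵥ v).re) (Set.Ioi 0) := by
      intro ε hε δ _ hεδ
      have := (hm ε δ hε hεδ).re_dotProduct_nonneg v
      rw [sub_mulVec, dotProduct_sub] at this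
      simpa using this
    have hb : BddBelow ((fun ε => (star v ⬝ᵥ f ε *ᵥ v).re) '' Set.Ioi 0) := by
      refine ⟨0, ?_⟩
      rintro _ ⟨ε, hε, rfl⟩
      exact (hf ε hε).re_dotProduct_nonneg v
    have ht := hmono.tendsto_nhdsGT hb
    refine ⟨_, ((Complex.continuous_ofReal.tendsto _).comp ht).congr' ?_⟩
    filter_upwards [self_mem_nhdsWithin] with ε hε
    exact (herm_quad (hf ε hε).isHermitian v).symm
  choose l hl using h1
  have h2 : ∀ i j, ∃ c, Tendsto (fun ε => f ε i j) (𝓝[>] 0) (𝓝 c) := by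
    intro i j
    refine ⟨(1 / 2 : ℂ) * ((l (Pi.single i 1 + Pi.single j 1) - l (Pi.single i 1) - l (Pi.single j 1))
       - Complex.I * (l (Pi.single i 1 + Pi.single j Complex.I) - l (Pi.single i 1) - l (Pi.single j 1))),
       Tendsto.congr (fun ε => (polar (f ε) i j).symm) ?_⟩
    exact (((hl _).sub (hl _) |>.sub (hl _)).sub
        ((((hl _).sub (hl _)).sub (hl _)).const_mul _)).const_mul _
  choose L hL using h2
  exact ⟨Matrix.of L, tendsto_pi_nhds.2 fun i => tendsto_pi_nhds.2 fun j => hL i j⟩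

theorem small_psd {M : Matrix (Fin d) (Fin d) ℂ} (hM : M.IsHermitian) {t : ℝ}
    (h : ∑ i, ∑ j, ‖M i j‖ ≤ t) : (M + (t : ℂ) • 1).PosSemidef := by
  have hH : (M + (t : ℂ) • 1).IsHermitian := by
    apply hM.add
    rw [IsHermitian, conjTranspose_smul]; simp
  refine PosSemidef.of_dotProduct_mulVec_nonneg hH fun x => ?_
  rw [herm_quad hH, Complex.zero_le_real, add_mulVec, dotProduct_add, smul_mulVec, one_mulVec,
    dotProduct_smul, Complex.add_re]
  set s := ∑ j, Complex.normSq (x j) with hs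
  have e1 : star x ⬝ᵥ x = (s : ℂ) := by
    simp only [dotProduct, hs, Pi.star_apply, Complex.star_def]
    push_cast
    refine Finset.sum_congr rfl fun j _ => ?_
    rw [Complex.normSq_eq_conj_mul_self]
  have hx : ∀ i, ‖x i‖ * ‖x i‖ ≤ s := by
    intro i
    rw [← pow_two, ← Complex.normSq_eq_norm_sq]
    exact Finset.single_le_sum (f := fun j => Complex.normSq (x j))
      (fun j _ => Complex.normSq_nonneg _) (mem_univ i)
  have hx2 : ∀ i j, ‖x i‖ * ‖x j‖ ≤ s := by
    intro i j
    nlinarith [hx i, hx j, sq_nonneg (‖x i‖ - ‖x j‖)]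
  have hs0 : 0 ≤ s := Finset.sum_nonneg fun j _ => Complex.normSq_nonneg _
  have e2 : ‖star x ⬝ᵥ M *ᵥ x‖ ≤ t * s := by
    calc ‖star x ⬝ᵥ M *ᵥ x‖ ≤ ∑ i, ∑ j, ‖M i j‖ * s := by
          simp only [dotProduct, mulVec]
          refine (norm_sum_le _ _).trans (Finset.sum_le_sum fun i _ => ?_)
          rw [Finset.mul_sum]
          refine (norm_sum_le _ _).trans (Finset.sum_le_sum fun j _ => ?_)
          rw [norm_mul, norm_mul, Pi.star_apply, norm_star]
          calc _ = ‖M i j‖ * (‖x i‖ * ‖x j‖) := by ring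
            _ ≤ _ := mul_le_mul_of_nonneg_left (hx2 i j) (norm_nonneg _)
      _ = (∑ i, ∑ j, ‖M i j‖) * s := by simp only [Finset.sum_mul]
      _ ≤ t * s := mul_le_mul_of_nonneg_right h hs0
  have e3 := (abs_le.1 (Complex.abs_re_le_norm (star x ⬝ᵥ M *ᵥ x))).1
  rw [e1, smul_eq_mul, Complex.re_ofReal_mul, Complex.ofReal_re]
  linarith

theorem eig_tendsto {ι : Type*} {l : Filter ι} {f : ι → Matrix (Fin d) (Fin d) ℂ}
    {L : Matrix (Fin d) (Fin d) ℂ} (hf : ∀ᶠ ε in l, (f ε).IsHermitian) (hL : L.IsHermitian)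
    (h : Tendsto f l (𝓝 L)) (i : Fin d) :
    Tendsto (fun ε => eigsDesc (f ε) i) l (𝓝 (eigsDesc L i)) := by
  have hn : Tendsto (fun ε => ∑ i, ∑ j, ‖(f ε - L) i j‖) l (𝓝 0) := by
    have h1 : Tendsto (fun ε => ∑ i, ∑ j, ‖(f ε - L) i j‖) l (𝓝 (∑ i : Fin d, ∑ j : Fin d, ‖(0:ℂ)‖)) := by
      refine tendsto_finsetSum _ fun i _ => tendsto_finsetSum _ fun j _ => Tendsto.norm ?_
      have h2 := ((tendsto_pi_nhds.1 (tendsto_pi_nhds.1 h i) j)).sub_const (L i j)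
      rw [sub_self] at h2
      exact h2
    simpa using h1
  rw [Metric.tendsto_nhds]
  intro δ hδ
  filter_upwards [hf, hn.eventually (gt_mem_nhds (half_pos hδ))] with ε hε hs
  have dL := DiagBy.of_hermitian hL
  have df := DiagBy.of_hermitian hε
  have p1 := small_psd (hε.sub hL) hs.le
  have p2 : (L - f ε + ((δ / 2 : ℝ) : ℂ) • 1).PosSemidef := by
    apply small_psd (hL.sub hε)
    refine le_trans (le_of_eq ?_) hs.le
    refine Finset.sum_congr rfl fun i _ => Finset.sum_congr rfl fun j _ => ?_
    rw [Matrix.sub_apply, Matrix.sub_apply, norm_sub_rev]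
  have q1 := dL.mono (df.add (δ / 2)) (by convert p1 using 1; abel) i
  have q2 := df.mono (dL.add (δ / 2)) (by convert p2 using 1; abel) i
  rw [Real.dist_eq, abs_lt]
  constructor <;> linarith

theorem logmaj_aux (A B : Matrix (Fin d) (Fin d) ℂ) (a b : Fin d → ℝ)
    (hA : DiagBy A a) (hB : DiagBy B b) (ha0 : ∀ i, 0 ≤ a i) (hb0 : ∀ i, 0 ≤ b i) :
    DiagBy (geoMean A B ^ 2) (eigsDesc (geoMean A B ^ 2)) ∧
    ∀ (k : Fin d) (S : Finset (Fin d)), S.card = (Finset.Iic k).card →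
    (∏ i ∈ S, (a i * b i.rev) ≤ ∏ i ∈ Finset.Iic k, eigsDesc (geoMean A B ^ 2) i) ∧
    (∏ i ∈ S, eigsDesc (geoMean A B ^ 2) i ≤ (∏ i ∈ S, a i) * ∏ i ∈ Finset.Iic k, b i) := by
  let F : ℝ → Matrix (Fin d) (Fin d) ℂ := fun ε =>
    geoMeanPD (A + (ε : ℂ) • 1) (B + (ε : ℂ) • 1)
  have hap : ∀ ε : ℝ, 0 < ε → ∀ i, 0 < a i + ε := fun ε h i => add_pos_of_nonneg_of_pos (ha0 i) h
  have hbp : ∀ ε : ℝ, 0 < ε → ∀ i, 0 < b i + ε := fun ε h i => add_pos_of_nonneg_of_pos (hb0 i) h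
  have hAp : ∀ ε : ℝ, 0 < ε → (A + (ε : ℂ) • 1).PosDef := fun ε h => (hA.add ε).posDef (hap ε h)
  have hBp : ∀ ε : ℝ, 0 < ε → (B + (ε : ℂ) • 1).PosDef := fun ε h => (hB.add ε).posDef (hbp ε h)
  have hF := fun ε h => geoMeanPD_spec (hAp ε h) (hBp ε h)
  have hdiff : ∀ (C : Matrix (Fin d) (Fin d) ℂ) (ε δ : ℝ), ε ≤ δ →
      ((C + (δ : ℂ) • 1) - (C + (ε : ℂ) • 1)).PosSemidef := by
    intro C ε δ h
    have : (C + (δ : ℂ) • 1) - (C + (ε : ℂ) • 1) = ((δ - ε : ℝ) : ℂ) • (1 : Matrix (Fin d) (Fin d) ℂ) := by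
      rw [add_sub_add_left_eq_sub, ← sub_smul]; simp
    rw [this]
    exact PosSemidef.one.smul (by rw [Complex.zero_le_real]; linarith)
  obtain ⟨L, hL⟩ := exists_lim F (fun ε h => (hF ε h).1.posSemidef) (fun ε δ h h' =>
    geo_mono (hAp ε h) (hAp δ (h.trans_le h')) (hF ε h).1 (hF δ (h.trans_le h')).1 (hF ε h).2
      (hF δ (h.trans_le h')).2 (hdiff A ε δ h') (hdiff B ε δ h'))
  have hLim : geoMean A B = L := hL.limUnder_eq
  rw [hLim]
  have hLh : L.IsHermitian := by
    have h1 : Tendsto (fun ε => (F ε)ᴴ) (𝓝[>] 0) (𝓝 Lᴴ) :=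
      (continuous_id.matrix_conjTranspose.tendsto L).comp hL
    refine tendsto_nhds_unique (h1.congr' ?_) hL
    filter_upwards [self_mem_nhdsWithin] with ε hε
    exact (hF ε hε).1.isHermitian
  have hL2 := hLh.pow 2
  have hF2 : ∀ ε, 0 < ε → (F ε ^ 2).IsHermitian := fun ε h => (hF ε h).1.isHermitian.pow 2
  have ht := eig_tendsto (f := fun ε => F ε ^ 2) (l := 𝓝[>] (0:ℝ)) (L := L ^ 2)
    (by filter_upwards [self_mem_nhdsWithin] with ε hε using hF2 ε hε) hL2 (hL.pow 2)
  have hid : Tendsto (fun ε : ℝ => ε) (𝓝[>] 0) (𝓝 0) := tendsto_id.mono_left nhdsWithin_le_nhds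
  have hta : ∀ i, Tendsto (fun ε => a i + ε) (𝓝[>] 0) (𝓝 (a i)) := fun i => by
    simpa using hid.const_add (a i)
  have htb : ∀ i, Tendsto (fun ε => b i + ε) (𝓝[>] 0) (𝓝 (b i)) := fun i => by
    simpa using hid.const_add (b i)
  refine ⟨DiagBy.of_hermitian hL2, fun k S hS => ⟨?_, ?_⟩⟩
  · refine le_of_tendsto_of_tendsto
      (tendsto_finsetProd S fun i _ => (hta i).mul (htb i.rev))
      (tendsto_finsetProd (Finset.Iic k) fun i _ => ht i) ?_
    filter_upwards [self_mem_nhdsWithin] with ε hε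
    exact riccati_lower (hA.add ε) (hB.add ε) (DiagBy.of_hermitian (hF2 ε hε)) (hap ε hε) (hbp ε hε)
      (hF ε hε).1 (hF ε hε).2 k S hS
  · refine le_of_tendsto_of_tendsto
      (tendsto_finsetProd S fun i _ => ht i)
      ((tendsto_finsetProd S fun i _ => hta i).mul
        (tendsto_finsetProd (Finset.Iic k) fun i _ => htb i)) ?_
    filter_upwards [self_mem_nhdsWithin] with ε hε
    exact riccati_upper (hA.add ε) (hB.add ε) (DiagBy.of_hermitian (hF2 ε hε)) (hap ε hε) (hbp ε hε)
      (hF ε hε).1 (hF ε hε).2 k S hS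

/-- Log-majorization for the eigenvalues of `G_1 = (A # B)^2`:
`(a_i b_{d+1-i}) ≺_(log) (λ_i(G_1)) ≺_(log) (a_i b_i)`. -/
theorem geometric_mean_squared_log_majorization
    {d : ℕ} (A B V W : Matrix (Fin d) (Fin d) ℂ) (a b : Fin d → ℝ)
    (hA : A.PosSemidef) (hB : B.PosSemidef)
    (hV : V ∈ Matrix.unitaryGroup (Fin d) ℂ)
    (hW : W ∈ Matrix.unitaryGroup (Fin d) ℂ)
    (ha : Antitone a) (hb : Antitone b)
    (ha0 : ∀ i, 0 ≤ a i) (hb0 : ∀ i, 0 ≤ b i)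
    (hAd : A = V * Matrix.diagonal (fun i => (a i : ℂ)) * Vᴴ)
    (hBd : B = W * Matrix.diagonal (fun i => (b i : ℂ)) * Wᴴ) :
    IsLogMaj (fun i => a i * b i.rev) (eigsDesc (geoMean A B ^ 2)) ∧
    IsLogMaj (eigsDesc (geoMean A B ^ 2)) (fun i => a i * b i) := by

  have hA' : DiagBy A a := ⟨ha, V, hV, hAd⟩
  have hB' : DiagBy B b := ⟨hb, W, hW, hBd⟩
  obtain ⟨hD, hk⟩ := logmaj_aux A B a b hA' hB' ha0 hb0
  set g := eigsDesc (geoMean A B ^ 2)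
  have hab : Antitone (fun i => a i * b i) := fun i j h =>
    mul_le_mul (ha h) (hb h) (hb0 _) (ha0 _)
  have hprod : ∏ i, a i * b i.rev = ∏ i, a i * b i := by
    rw [Finset.prod_mul_distrib, Finset.prod_mul_distrib]
    congr 1
    exact Equiv.prod_comp Fin.revPerm b
  have htot : ∏ i, a i * b i.rev = ∏ i, g i := by
    rcases d with _ | n
    · simp
    · have hI : Finset.Iic (Fin.last n) = Finset.univ := by
        ext i; simp [Fin.le_last]
      obtain ⟨h1, h2⟩ := hk (Fin.last n) Finset.univ (by rw [hI])
      rw [hI] at h1 h2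
      refine le_antisymm h1 (h2.trans (le_of_eq ?_))
      rw [hprod, Finset.prod_mul_distrib]
  refine ⟨⟨fun k => ?_, htot⟩, fun k => ?_, by rw [← htot, hprod]⟩
  · rw [sortDesc_of_antitone hD.1]
    let x : Fin d → ℝ := fun i => a i * b i.rev
    let σ : Equiv.Perm (Fin d) := Fin.revPerm.trans (Tuple.sort x)
    have h1 := (hk k ((Finset.Iic k).map σ.toEmbedding) (Finset.card_map _)).1
    rw [Finset.prod_map] at h1
    exact h1
  · rw [sortDesc_of_antitone hD.1, sortDesc_of_antitone hab]
    have h1 := (hk k (Finset.Iic k) rfl).2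
    rwa [← Finset.prod_mul_distrib] at h1
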